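/- For any μ ≥ 1 and σ > 0, the quadratic polynomial p_{σ,μ}(t) = t² - γ^mod((4μ-1)/(2μ), 1/(2σ^{2μ})) / γ^mod((4μ-3)/(2μ), 1/(2σ^{2μ})) is orthogonal to all polynomials of degree at most 1 on [-1,1] with respect to the weight k̃_{σ,μ}; that is, ∫_{-1}^{1} p_{σ,μ}(t)(α + βt) k̃_{σ,μ}(t) dt = 0 for all real α, β. -/

import Mathlib

/-!
The function `k̃_{σ,μ}` is an even probability density: the substitution `u = t^(2μ) / (2σ^(2μ))`
turns its absolute moments into quotients of modified incomplete gamma functions. In particular the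
constant subtracted in `p_{σ,μ}` is the second moment, so `p_{σ,μ}(t) = t² - 𝔼[t²]` has mean zero.
This is orthogonality to constants; orthogonality to `t` is parity.
-/

open MeasureTheory

/-- Lower incomplete gamma function `γ(s,z) = ∫₀^z u^(s-1) e^(-u) du`. -/
noncomputable def lowGamma (s z : ℝ) : ℝ := ∫ u in (0:ℝ)..z, u ^ (s - 1) * Real.exp (-u)

/-- Modified lower incomplete gamma function `γ^mod(s,z) = γ(s,z)/z^s`. -/
noncomputable def gammaMod (s z : ℝ) : ℝ := lowGamma s z / z ^ s

/-- First family of densities `k̃_{σ,μ}` on `[-1,1]`. -/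
noncomputable def kTilde (σ μ t : ℝ) : ℝ :=
  (μ / gammaMod ((4 * μ - 3) / (2 * μ)) (1 / (2 * σ ^ (2 * μ)))) *
    (t ^ 2) ^ (2 * μ - 2) * Real.exp (-(1 / 2) * (t ^ 2 / σ ^ 2) ^ μ)

/-- The quadratic polynomial `p_{σ,μ}`. -/
noncomputable def pPoly (σ μ t : ℝ) : ℝ :=
  t ^ 2 - gammaMod ((4 * μ - 1) / (2 * μ)) (1 / (2 * σ ^ (2 * μ)))
            / gammaMod ((4 * μ - 3) / (2 * μ)) (1 / (2 * σ ^ (2 * μ)))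

section Parity

variable {E : Type*} [NormedAddCommGroup E] [NormedSpace ℝ E] {f : ℝ → E}

theorem integral_neg_self_eq_zero_of_odd (hf : f.Odd) (a : ℝ) : ∫ t in (-a)..a, f t = 0 := by
  have h : ∫ t in (-a)..a, f (-t) = ∫ t in (-a)..a, f t := by
    rw [intervalIntegral.integral_comp_neg, neg_neg]
  simp only [hf.eq, intervalIntegral.integral_neg] at h
  have : IsAddTorsionFree E := .of_isTorsionFree ℝ E
  exact self_eq_neg.1 h.symm

theorem integral_neg_self_eq_two_nsmul_of_even (hf : f.Even) (a : ℝ) :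
    ∫ t in (-a)..a, f t = 2 • ∫ t in (0 : ℝ)..a, f t := by
  have h_left : ∫ t in (-a)..0, f t = ∫ t in (0 : ℝ)..a, f t := by
    simpa [hf.eq] using (intervalIntegral.integral_comp_neg (a := 0) (b := a) f).symm
  by_cases hfi : IntervalIntegrable f volume 0 a
  · have hfi_left : IntervalIntegrable f volume (-a) 0 := by
      simpa [hf.eq] using IntervalIntegrable.iff_comp_neg (by simp) |>.1 hfi.symm
    rw [← intervalIntegral.integral_add_adjacent_intervals hfi_left hfi, h_left, two_nsmul]
  · have hfi_symm : ¬IntervalIntegrable f volume (-a) a := fun h =>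
      hfi (h.mono_set (Set.uIcc_subset_uIcc_right (by
        rcases le_total 0 a with ha | ha <;> simp [ha])))
    rw [intervalIntegral.integral_undef hfi, intervalIntegral.integral_undef hfi_symm, nsmul_zero]

theorem integral_neg_self_mul_affine_of_even {f : ℝ → ℝ} (hf : f.Even) {a : ℝ}
    (hfi : IntervalIntegrable f volume (-a) a) (α β : ℝ) :
    ∫ t in (-a)..a, f t * (α + β * t) = α * ∫ t in (-a)..a, f t := by
  have h_odd : Function.Odd fun t => t * f t := fun t => by simp [hf.eq]
  have h_split (t : ℝ) : f t * (α + β * t) = α * f t + β * (t * f t) := by ring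
  simp_rw [h_split]
  have h_mul : IntervalIntegrable (fun t => t * f t) volume (-a) a :=
    hfi.continuousOn_mul continuousOn_id
  rw [intervalIntegral.integral_add (hfi.const_mul α) (h_mul.const_mul β),
    intervalIntegral.integral_const_mul, intervalIntegral.integral_const_mul,
    integral_neg_self_eq_zero_of_odd h_odd, mul_zero, add_zero]

end Parity

theorem sq_rpow (t r : ℝ) : (t ^ 2) ^ r = |t| ^ (2 * r) := by
  rw [← sq_abs, ← Real.rpow_natCast_mul (abs_nonneg t), Nat.cast_ofNat]

theorem intervalIntegrable_abs_rpow {r : ℝ} (hr : -1 < r) (a b : ℝ) :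
    IntervalIntegrable (fun t : ℝ => |t| ^ r) volume a b := by
  refine intervalIntegrable_of_even (fun t => by rw [abs_neg]) fun x hx => ?_
  refine (intervalIntegral.intervalIntegrable_rpow' hr).congr_uIoo fun t ht => ?_
  rw [Set.uIoo_of_le hx.le] at ht
  simp only [abs_of_pos ht.1]

section IncompleteGamma

theorem lowGamma_pos {s z : ℝ} (hs : 0 < s) (hz : 0 < z) : 0 < lowGamma s z := by
  refine intervalIntegral.intervalIntegral_pos_of_pos_on ?_ (fun u hu => ?_) hz
  · exact (intervalIntegral.intervalIntegrable_rpow' (by linarith)).mul_continuousOn (by fun_prop)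
  · have := hu.1
    positivity

theorem gammaMod_pos {s z : ℝ} (hs : 0 < s) (hz : 0 < z) : 0 < gammaMod s z :=
  div_pos (lowGamma_pos hs hz) (Real.rpow_pos_of_pos hz s)

theorem lowGamma_mul_rpow (s : ℝ) {c p a : ℝ} (hc : 0 < c) (hp : 0 < p) (ha : 0 ≤ a) :
    lowGamma s (c * a ^ p) =
      c ^ s * (p * ∫ t in (0 : ℝ)..a, t ^ (p * s - 1) * Real.exp (-(c * t ^ p))) := by
  have h_subst := intervalIntegral.integral_comp_mul_deriv_of_deriv_nonneg (a := 0) (b := a)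
    (f := fun t => c * t ^ p) (f' := fun t => c * (p * t ^ (p - 1)))
    (g := fun u => u ^ (s - 1) * Real.exp (-u))
    (continuous_const.mul (Real.continuous_rpow_const hp.le)).continuousOn
    (fun t ht => by
      rw [min_eq_left ha] at ht
      exact (Real.hasDerivAt_rpow_const (Or.inl ht.1.ne')).const_mul c)
    (fun t ht => by
      rw [min_eq_left ha] at ht
      have := ht.1
      positivity)
  rw [Real.zero_rpow hp.ne', mul_zero] at h_subst
  rw [lowGamma, ← h_subst, ← intervalIntegral.integral_const_mul,
    ← intervalIntegral.integral_const_mul]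
  refine intervalIntegral.integral_congr_Ioo_of_le ha fun t ht => ?_
  have h_c : c ^ s = c ^ (s - 1) * c := by rw [← Real.rpow_add_one hc.ne', sub_add_cancel]
  have h_t : t ^ (p * s - 1) = (t ^ p) ^ (s - 1) * t ^ (p - 1) := by
    rw [← Real.rpow_mul ht.1.le, ← Real.rpow_add ht.1]
    ring_nf
  simp only [Function.comp_apply]
  rw [Real.mul_rpow hc.le (Real.rpow_nonneg ht.1.le p), h_c, h_t]
  ring

theorem gammaMod_eq_mul_integral (s : ℝ) {z p : ℝ} (hz : 0 < z) (hp : 0 < p) :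
    gammaMod s z = p * ∫ t in (0 : ℝ)..1, t ^ (p * s - 1) * Real.exp (-(z * t ^ p)) := by
  have h := lowGamma_mul_rpow s hz hp zero_le_one
  rw [Real.one_rpow, mul_one] at h
  rw [gammaMod, h, mul_div_cancel_left₀ _ (Real.rpow_pos_of_pos hz s).ne']

end IncompleteGamma

section Density

variable {σ μ : ℝ}

theorem kTilde_even (σ μ : ℝ) : (kTilde σ μ).Even := fun t => by simp only [kTilde, neg_sq]

theorem pPoly_even (σ μ : ℝ) : (pPoly σ μ).Even := fun t => by simp only [pPoly, neg_sq]

theorem continuous_pPoly (σ μ : ℝ) : Continuous (pPoly σ μ) := by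
  unfold pPoly
  fun_prop

theorem kTilde_eq_abs_rpow (hσ : 0 ≤ σ) (μ t : ℝ) :
    kTilde σ μ t = μ / gammaMod ((4 * μ - 3) / (2 * μ)) (1 / (2 * σ ^ (2 * μ))) *
      (|t| ^ (4 * μ - 4) * Real.exp (-(1 / (2 * σ ^ (2 * μ)) * |t| ^ (2 * μ)))) := by
  have h_exp : (t ^ 2 / σ ^ 2) ^ μ = |t| ^ (2 * μ) / σ ^ (2 * μ) := by
    rw [Real.div_rpow (sq_nonneg t) (sq_nonneg σ), sq_rpow, sq_rpow, abs_of_nonneg hσ]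
  rw [kTilde, h_exp, sq_rpow, mul_assoc]
  ring_nf

theorem intervalIntegrable_kTilde (σ : ℝ) (hμ : 3 / 4 < μ) (a b : ℝ) :
    IntervalIntegrable (kTilde σ μ) volume a b := by
  have h_pow : IntervalIntegrable (fun t : ℝ => (t ^ 2) ^ (2 * μ - 2)) volume a b := by
    simp_rw [sq_rpow]
    exact intervalIntegrable_abs_rpow (by linarith) a b
  have h_exp : Continuous fun t : ℝ => Real.exp (-(1 / 2) * (t ^ 2 / σ ^ 2) ^ μ) := by
    have := Real.continuous_rpow_const (q := μ) (by linarith)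
    fun_prop
  exact (h_pow.const_mul _).mul_continuousOn h_exp.continuousOn

-- A divergent integral makes both sides zero, by the conventions for integrals and division.
theorem integral_abs_rpow_mul_kTilde (hσ : 0 < σ) (hμ : 0 < μ) (r : ℝ) :
    ∫ t in (-1 : ℝ)..1, |t| ^ r * kTilde σ μ t =
      gammaMod ((4 * μ - 3 + r) / (2 * μ)) (1 / (2 * σ ^ (2 * μ))) /
        gammaMod ((4 * μ - 3) / (2 * μ)) (1 / (2 * σ ^ (2 * μ))) := by
  have h_even : Function.Even fun t => |t| ^ r * kTilde σ μ t := fun t => by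
    simp only [abs_neg, (kTilde_even σ μ).eq]
  set z := 1 / (2 * σ ^ (2 * μ)) with hz
  set c := μ / gammaMod ((4 * μ - 3) / (2 * μ)) z with hc
  have h_exponent : 2 * μ * ((4 * μ - 3 + r) / (2 * μ)) - 1 = r + (4 * μ - 4) := by
    rw [mul_div_cancel₀ _ (by positivity)]
    ring
  have h_half : ∫ t in (0 : ℝ)..1, |t| ^ r * kTilde σ μ t =
      c * ∫ t in (0 : ℝ)..1, t ^ (r + (4 * μ - 4)) * Real.exp (-(z * t ^ (2 * μ))) := by
    rw [← intervalIntegral.integral_const_mul]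
    refine intervalIntegral.integral_congr_Ioo_of_le zero_le_one fun t ht => ?_
    simp only [kTilde_eq_abs_rpow hσ.le, abs_of_pos ht.1, Real.rpow_add ht.1, ← hz, ← hc]
    ring
  rw [integral_neg_self_eq_two_nsmul_of_even h_even, h_half,
    gammaMod_eq_mul_integral _ (by positivity : 0 < z) (by positivity : 0 < 2 * μ), h_exponent, hc,
    nsmul_eq_mul]
  ring

theorem integral_kTilde_eq_one (hσ : 0 < σ) (hμ : 3 / 4 < μ) :
    ∫ t in (-1 : ℝ)..1, kTilde σ μ t = 1 := by
  have h_norm : 0 < gammaMod ((4 * μ - 3) / (2 * μ)) (1 / (2 * σ ^ (2 * μ))) :=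
    gammaMod_pos (div_pos (by linarith) (by linarith)) (by positivity)
  have h := integral_abs_rpow_mul_kTilde hσ (by linarith : 0 < μ) 0
  simpa only [Real.rpow_zero, one_mul, add_zero, div_self h_norm.ne'] using h

theorem integral_sq_mul_kTilde (hσ : 0 < σ) (hμ : 0 < μ) :
    ∫ t in (-1 : ℝ)..1, t ^ 2 * kTilde σ μ t =
      gammaMod ((4 * μ - 1) / (2 * μ)) (1 / (2 * σ ^ (2 * μ))) /
        gammaMod ((4 * μ - 3) / (2 * μ)) (1 / (2 * σ ^ (2 * μ))) := by
  have h := integral_abs_rpow_mul_kTilde hσ hμ 2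
  simp only [Real.rpow_two, sq_abs] at h
  rw [h, show 4 * μ - 3 + 2 = 4 * μ - 1 by ring]

theorem integral_pPoly_mul_kTilde (hσ : 0 < σ) (hμ : 3 / 4 < μ) :
    ∫ t in (-1 : ℝ)..1, pPoly σ μ t * kTilde σ μ t = 0 := by
  have h_int := intervalIntegrable_kTilde σ hμ (-1) 1
  simp only [pPoly, sub_mul]
  rw [intervalIntegral.integral_sub (h_int.continuousOn_mul (continuousOn_pow 2))
    (h_int.const_mul _), intervalIntegral.integral_const_mul,
    integral_sq_mul_kTilde hσ (by linarith), integral_kTilde_eq_one hσ hμ, mul_one, sub_self]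

/-- The bound `3 / 4 < μ` is the integrability threshold of `k̃_{σ,μ}`, which behaves like
`|t| ^ (4μ - 4)` at the origin. -/
theorem pPoly_orthogonal_to_linear_general (hσ : 0 < σ) (hμ : 3 / 4 < μ) (α β : ℝ) :
    ∫ t in (-1 : ℝ)..1, pPoly σ μ t * (α + β * t) * kTilde σ μ t = 0 := by
  have h_even : (pPoly σ μ * kTilde σ μ).Even := (pPoly_even σ μ).mul_even (kTilde_even σ μ)
  have h_int : IntervalIntegrable (pPoly σ μ * kTilde σ μ) volume (-1) 1 :=
    (intervalIntegrable_kTilde σ hμ _ _).continuousOn_mul (continuous_pPoly σ μ).continuousOn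
  calc ∫ t in (-1 : ℝ)..1, pPoly σ μ t * (α + β * t) * kTilde σ μ t
      = ∫ t in (-1 : ℝ)..1, (pPoly σ μ * kTilde σ μ) t * (α + β * t) := by
        simp only [Pi.mul_apply, mul_right_comm]
    _ = α * ∫ t in (-1 : ℝ)..1, (pPoly σ μ * kTilde σ μ) t :=
        integral_neg_self_mul_affine_of_even h_even h_int α β
    _ = α * ∫ t in (-1 : ℝ)..1, pPoly σ μ t * kTilde σ μ t := rfl
    _ = 0 := by rw [integral_pPoly_mul_kTilde hσ hμ, mul_zero]

end Density

/-- `p_{σ,μ}` is orthogonal to all polynomials of degree at most one on `[-1,1]`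
with respect to the weight `k̃_{σ,μ}`. -/
theorem pPoly_orthogonal_to_linear (σ μ : ℝ) (hσ : 0 < σ) (hμ : 1 ≤ μ) :
    ∀ α β : ℝ,
      ∫ t in (-1:ℝ)..1, pPoly σ μ t * (α + β * t) * kTilde σ μ t = 0 := by
  exact fun α β => pPoly_orthogonal_to_linear_general hσ (by linarith) α β
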